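/- Let k, ℓ be integers with 1 ≤ k ≤ ℓ, let L be a right Leibniz algebra over a field of characteristic ≠ 2, and let B be a two-sided ideal of L that is Es_k-right nil (i.e. Es(B)_{(L,k)} = 0). Then every right-normed product P = a_m a_{m−1} ⋯ a_1 of elements of L having at least 2ℓ factors in B belongs to (B^ℓ)_{(L,k)}, the span of right-normed products d a_k ⋯ a_1 with d ∈ B^ℓ and a_1, …, a_k ∈ L. -/

import Mathlib

open Classical

/-- The binary product `mul` is bilinear over `F`. -/
def IsBilin (F : Type*) [Field F] {L : Type*} [AddCommGroup L] [Module F L]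
    (mul : L → L → L) : Prop :=
  (∀ a b c : L, mul (a + b) c = mul a c + mul b c) ∧
  (∀ a b c : L, mul a (b + c) = mul a b + mul a c) ∧
  (∀ (r : F) (a b : L), mul (r • a) b = r • mul a b) ∧
  (∀ (r : F) (a b : L), mul a (r • b) = r • mul a b)

/-- The (right) Leibniz identity: `a(bc) = (ab)c - (ac)b`. -/
def IsRightLeibniz {L : Type*} [AddCommGroup L] (mul : L → L → L) : Prop :=
  ∀ a b c : L, mul a (mul b c) = mul (mul a b) c - mul (mul a c) b

/-- The left Leibniz identity: `a(bc) = (ab)c + b(ac)`. -/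
def IsLeftLeibniz {L : Type*} [AddCommGroup L] (mul : L → L → L) : Prop :=
  ∀ a b c : L, mul a (mul b c) = mul (mul a b) c + mul b (mul a c)

/-- `B` is a two-sided ideal: `xb ∈ B` and `bx ∈ B` for all `x ∈ L`, `b ∈ B`. -/
def IsIdeal {F : Type*} [Field F] {L : Type*} [AddCommGroup L] [Module F L]
    (mul : L → L → L) (B : Submodule F L) : Prop :=
  ∀ (x b : L), b ∈ B → mul x b ∈ B ∧ mul b x ∈ B

/-- `Ess F mul`: the two-sided ideal of `L` generated by the squares `{xx : x ∈ L}`. -/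
def Ess (F : Type*) [Field F] {L : Type*} [AddCommGroup L] [Module F L]
    (mul : L → L → L) : Submodule F L :=
  sInf {I : Submodule F L | (∀ x : L, mul x x ∈ I) ∧ IsIdeal mul I}

/-- The two-sided ideal of `L` generated by a subspace `S`. -/
def idealClosure (F : Type*) [Field F] {L : Type*} [AddCommGroup L] [Module F L]
    (mul : L → L → L) (S : Submodule F L) : Submodule F L :=
  sInf {I : Submodule F L | S ≤ I ∧ IsIdeal mul I}

/-- Right powers: `B^0 = L` (convention), `B^1 = B`,
`B^{n+1} = span {bc : b ∈ B^n, c ∈ B}`. -/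
def rpow (F : Type*) [Field F] {L : Type*} [AddCommGroup L] [Module F L]
    (mul : L → L → L) (B : Submodule F L) : ℕ → Submodule F L
  | 0 => ⊤
  | 1 => B
  | n + 2 => Submodule.span F
      {x : L | ∃ b ∈ rpow F mul B (n + 1), ∃ c ∈ B, x = mul b c}

/-- Left powers: `^0B = L` (convention), `^1B = B`,
`^{n+1}B = span {bc : b ∈ B, c ∈ ^nB}`. -/
def lpow (F : Type*) [Field F] {L : Type*} [AddCommGroup L] [Module F L]
    (mul : L → L → L) (B : Submodule F L) : ℕ → Submodule F L
  | 0 => ⊤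
  | 1 => B
  | n + 2 => Submodule.span F
      {x : L | ∃ b ∈ B, ∃ c ∈ lpow F mul B (n + 1), x = mul b c}

/-- The right-normed product `rightProd mul a [b₁, …, bₖ] = ((…(a b₁)…) bₖ)`,
with all parentheses associated to the left. -/
def rightProd {L : Type*} (mul : L → L → L) : L → List L → L
  | a, [] => a
  | a, b :: l => rightProd mul (mul a b) l

/-- `D_{(L,k)}`: the span of all right-normed products `d a_k ⋯ a_1`
with `d ∈ D` and `a_i ∈ L`. -/
def rightMulSpan (F : Type*) [Field F] {L : Type*} [AddCommGroup L] [Module F L]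
    (mul : L → L → L) (D : Submodule F L) (k : ℕ) : Submodule F L :=
  Submodule.span F
    {x : L | ∃ d ∈ D, ∃ l : List L, l.length = k ∧ x = rightProd mul d l}

/-- A formal nonassociative product (a word of elements of `L` parenthesized
in an arbitrary way). -/
inductive PTree (L : Type*) where
  | leaf : L → PTree L
  | node : PTree L → PTree L → PTree L

/-- Evaluation of a parenthesized product in `L`. -/
def PTree.eval {L : Type*} (mul : L → L → L) : PTree L → L
  | .leaf a => a
  | .node s t => mul (PTree.eval mul s) (PTree.eval mul t)

/-- The list of factors of a parenthesized product, in order. -/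
def PTree.leaves {L : Type*} : PTree L → List L
  | .leaf a => [a]
  | .node s t => s.leaves ++ t.leaves

/-- The length (number of factors) of a parenthesized product. -/
def PTree.length {L : Type*} (t : PTree L) : ℕ := t.leaves.length

/-- The weight of a parenthesized product with respect to `B`:
the number of its factors lying in `B`. -/
noncomputable def PTree.weight {F : Type*} [Field F] {L : Type*} [AddCommGroup L]
    [Module F L] (B : Submodule F L) (t : PTree L) : ℕ :=
  t.leaves.countP (fun y => decide (y ∈ B))

/-- `B^{⟨n⟩}`: the span of all products of elements of `L` of weight at least `n`
with respect to `B`. -/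
noncomputable def weightSpan (F : Type*) [Field F] {L : Type*} [AddCommGroup L]
    [Module F L] (mul : L → L → L) (B : Submodule F L) (n : ℕ) : Submodule F L :=
  Submodule.span F
    {x : L | ∃ t : PTree L, n ≤ PTree.weight B t ∧ x = PTree.eval mul t}

/-- `B^{{n}}`: the span of all length-`n` products all of whose factors lie in `B`. -/
def lengthSpanIn (F : Type*) [Field F] {L : Type*} [AddCommGroup L] [Module F L]
    (mul : L → L → L) (B : Submodule F L) (n : ℕ) : Submodule F L :=
  Submodule.span F
    {x : L | ∃ t : PTree L, PTree.length t = n ∧ (∀ a ∈ PTree.leaves t, a ∈ B) ∧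
      x = PTree.eval mul t}

/-!
By the Leibniz identity every right multiplication `x ↦ x * c` is a derivation of `L`. Hence each
power `B^n` is stable under right multiplication by `L`, while right multiplication by an element
of `B` carries `B^n` into `B^{n+1}`. Reading a right-normed product from its first factor, one sees
that it lies in `B^w`, where `w` is the number of its factors in `B`. Unfolding the last `k` factors
of `B^{n+k}` with `n ≥ 1` shows that it is contained in `(B^n)_{(L,k)}`, so `w ≥ ℓ + k` is enough,
and `ℓ + k ≤ 2ℓ`.
-/

theorem rightProd_concat {L : Type*} (mul : L → L → L) (a : L) (s : List L) (c : L) :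
    rightProd mul a (s ++ [c]) = mul (rightProd mul a s) c := by
  induction s generalizing a with
  | nil => rfl
  | cons b _ ih => exact ih (mul a b)

section

variable {F : Type*} [Field F] {L : Type*} [AddCommGroup L] [Module F L] {mul : L → L → L}

theorem IsRightLeibniz.mul_mul_eq_add (hleib : IsRightLeibniz mul) (a b c : L) :
    mul (mul a b) c = mul (mul a c) b + mul a (mul b c) := by
  rw [hleib a b c, add_sub_cancel]

/-- Right multiplication `x ↦ x * c` as a linear map. -/
def IsBilin.mulRight (hbil : IsBilin F mul) (c : L) : L →ₗ[F] L where
  toFun x := mul x c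
  map_add' x y := hbil.1 x y c
  map_smul' r x := hbil.2.2.1 r x c

theorem IsBilin.mul_mem_of_mem_span (hbil : IsBilin F mul) {S : Set L} {T : Submodule F L} {c x : L}
    (hS : ∀ y ∈ S, mul y c ∈ T) (hx : x ∈ Submodule.span F S) : mul x c ∈ T :=
  (Submodule.span_le (p := T.comap (hbil.mulRight c))).2 hS hx

theorem mul_mem_rightMulSpan_succ (hbil : IsBilin F mul) {D : Submodule F L} {k : ℕ} {x : L}
    (hx : x ∈ rightMulSpan F mul D k) (c : L) : mul x c ∈ rightMulSpan F mul D (k + 1) := by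
  refine hbil.mul_mem_of_mem_span ?_ hx
  rintro _ ⟨d, hd, s, hs, rfl⟩
  exact Submodule.subset_span ⟨d, hd, s ++ [c], by simp [hs], (rightProd_concat mul d s c).symm⟩

variable {B : Submodule F L}

theorem rpow_succ_eq_span {n : ℕ} (hn : n ≠ 0) :
    rpow F mul B (n + 1) =
      Submodule.span F {x | ∃ b ∈ rpow F mul B n, ∃ c ∈ B, x = mul b c} := by
  obtain ⟨m, rfl⟩ := Nat.exists_eq_succ_of_ne_zero hn
  rfl

theorem rpow_succ_le_iff {n : ℕ} (hn : n ≠ 0) {T : Submodule F L} :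
    rpow F mul B (n + 1) ≤ T ↔ ∀ b ∈ rpow F mul B n, ∀ c ∈ B, mul b c ∈ T := by
  rw [rpow_succ_eq_span hn, Submodule.span_le]
  constructor
  · exact fun h b hb c hc => h ⟨b, hb, c, hc, rfl⟩
  · rintro h _ ⟨b, hb, c, hc, rfl⟩
    exact h b hb c hc

theorem rpow_add_le_rightMulSpan (hbil : IsBilin F mul) {n : ℕ} (hn : n ≠ 0) (k : ℕ) :
    rpow F mul B (n + k) ≤ rightMulSpan F mul (rpow F mul B n) k := by
  induction k with
  | zero => exact fun x hx => Submodule.subset_span ⟨x, hx, [], rfl, rfl⟩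
  | succ k ih =>
    refine (rpow_succ_le_iff (n := n + k) (by omega)).2 fun b hb c _ => ?_
    exact mul_mem_rightMulSpan_succ hbil (ih hb) c

theorem mul_mem_rpow_succ (hB : IsIdeal mul B) {n : ℕ} {b c : L}
    (hb : b ∈ rpow F mul B n) (hc : c ∈ B) : mul b c ∈ rpow F mul B (n + 1) := by
  rcases eq_or_ne n 0 with rfl | hn
  · exact (hB b c hc).1
  · exact (rpow_succ_le_iff hn).1 le_rfl b hb c hc

theorem mul_mem_rpow (hbil : IsBilin F mul) (hleib : IsRightLeibniz mul) (hB : IsIdeal mul B)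
    {n : ℕ} {b : L} (hb : b ∈ rpow F mul B n) (x : L) : mul b x ∈ rpow F mul B n := by
  induction n generalizing b x with
  | zero => exact Submodule.mem_top
  | succ n ih =>
    rcases eq_or_ne n 0 with rfl | hn
    · exact (hB x b hb).2
    rw [rpow_succ_eq_span hn] at hb
    refine hbil.mul_mem_of_mem_span ?_ hb
    rintro _ ⟨b, hb, c, hc, rfl⟩
    rw [hleib.mul_mul_eq_add]
    exact add_mem (mul_mem_rpow_succ hB (ih hb x) hc) (mul_mem_rpow_succ hB hb (hB x c hc).2)

theorem rpow_antitone (hbil : IsBilin F mul) (hleib : IsRightLeibniz mul) (hB : IsIdeal mul B) :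
    Antitone (rpow F mul B) := by
  refine antitone_nat_of_succ_le fun n => ?_
  rcases eq_or_ne n 0 with rfl | hn
  · exact le_top
  · exact (rpow_succ_le_iff hn).2 fun b hb c _ => mul_mem_rpow hbil hleib hB hb c

theorem rightProd_mem_rpow_add_countP (hbil : IsBilin F mul) (hleib : IsRightLeibniz mul)
    (hB : IsIdeal mul B) {n : ℕ} {a : L} (ha : a ∈ rpow F mul B n) (s : List L) :
    rightProd mul a s ∈ rpow F mul B (n + s.countP (fun y => decide (y ∈ B))) := by
  induction s generalizing a n with
  | nil => exact ha
  | cons b s ih =>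
    by_cases hb : b ∈ B
    · simpa [rightProd, hb, add_assoc, add_comm 1] using ih (mul_mem_rpow_succ hB ha hb)
    · simpa [rightProd, hb] using ih (mul_mem_rpow hbil hleib hB ha b)

theorem rightProd_mem_rpow_countP_cons (hbil : IsBilin F mul) (hleib : IsRightLeibniz mul)
    (hB : IsIdeal mul B) (a : L) (s : List L) :
    rightProd mul a s ∈ rpow F mul B ((a :: s).countP (fun y => decide (y ∈ B))) := by
  by_cases ha : a ∈ B
  · have ha' : a ∈ rpow F mul B 1 := ha
    simpa [ha, add_comm 1] using rightProd_mem_rpow_add_countP hbil hleib hB ha' s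
  · have ha' : a ∈ rpow F mul B 0 := Submodule.mem_top
    simpa [ha] using rightProd_mem_rpow_add_countP hbil hleib hB ha' s

theorem rightProd_mem_rightMulSpan_general (hbil : IsBilin F mul) (hleib : IsRightLeibniz mul)
    (hB : IsIdeal mul B) {k l : ℕ} (hl : l ≠ 0) {a : L} {s : List L}
    (hw : l + k ≤ (a :: s).countP (fun y => decide (y ∈ B))) :
    rightProd mul a s ∈ rightMulSpan F mul (rpow F mul B l) k := by
  have hmem : rightProd mul a s ∈ rpow F mul B (l + k) :=
    rpow_antitone hbil hleib hB hw (rightProd_mem_rpow_countP_cons hbil hleib hB a s)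
  exact rpow_add_le_rightMulSpan hbil hl k hmem

end

/-- If `B` is `Es_k`-right nil and `1 ≤ k ≤ ℓ`, every right-normed
product with at least `2ℓ` factors in `B` belongs to `(B^ℓ)_{(L,k)}`. -/
theorem rightProd_mem_rightMulSpan
    {F : Type*} [Field F] {L : Type*} [AddCommGroup L] [Module F L]
    (h2 : (2 : F) ≠ 0) (mul : L → L → L)
    (hbil : IsBilin F mul) (hleib : IsRightLeibniz mul)
    (k l : ℕ) (hk : 1 ≤ k) (hkl : k ≤ l)
    (B : Submodule F L) (hB : IsIdeal mul B)
    (hnil : rightMulSpan F mul (B ⊓ Ess F mul) k = ⊥)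
    (a : L) (s : List L)
    (hw : 2 * l ≤ (a :: s).countP (fun y => decide (y ∈ B))) :
    rightProd mul a s ∈ rightMulSpan F mul (rpow F mul B l) k :=
  rightProd_mem_rightMulSpan_general hbil hleib hB (by omega) (by omega)
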